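/- Let α, β, a, b be integers with α ≥ 1, β ≥ 1 and a·b < 0 (i.e., a > 0 > b or a < 0 < b). Then the topological index of the BB(ᾱ, β̄, a, b) code, with f = 1 + x + x^{-α} y^{b} and g = 1 + y + y^{-β} x^{a} in R, is Q = dim_{F₂} R ⧸ (f, g) = (α + 1)·(β + 1) − a·b. -/

import Mathlib

noncomputable section

/-- The Laurent polynomial ring `F₂[x^±, y^±]` as a group algebra. -/
abbrev LaurentR : Type := AddMonoidAlgebra (ZMod 2) (ℤ × ℤ)

/-- The monomial `x^i y^j`. -/
def mono (i j : ℤ) : LaurentR := AddMonoidAlgebra.single (i, j) 1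

/-- The BB polynomial `f = 1 + x + x^{-α} y^{b}`. -/
def fBB (α b : ℤ) : LaurentR := 1 + mono 1 0 + mono (-α) b

/-- The BB polynomial `g = 1 + y + y^{-β} x^{a}`. -/
def gBB (β a : ℤ) : LaurentR := 1 + mono 0 1 + mono a (-β)

open Polynomial

theorem Valuation.map_norm_one_add_mul_eq_one {K L Γ : Type*} [Field K] [Field L] [Algebra K L]
    [LinearOrderedCommGroupWithZero Γ] (v : Valuation K Γ) {n : ℕ} {t : K} (ht : v t < 1)
    {u e : L} (hu : u ^ n = algebraMap K L t) (he : IsIntegral v.valuationSubring e) :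
    v (Algebra.norm K (1 + u * e)) = 1 := by
  have hn : n ≠ 0 := by
    rintro rfl
    have : t = 1 := (algebraMap K L).injective (by simpa using hu.symm)
    simp [this] at ht
  let t' : v.valuationSubring := ⟨t, ht.le⟩
  have ht' : t' ∈ IsLocalRing.maximalIdeal v.valuationSubring :=
    (v.mem_maximalIdeal_iff).mpr ht
  have hut : u ^ n = algebraMap v.valuationSubring L t' := hu
  have hui : IsIntegral v.valuationSubring u :=
    IsIntegral.of_pow (Nat.pos_of_ne_zero hn) (hut ▸ isIntegral_algebraMap)
  have hle : ∀ w : L, IsIntegral v.valuationSubring w → v (Algebra.norm K w) ≤ 1 := by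
    intro w hw
    obtain ⟨z, hz⟩ := IsIntegrallyClosed.isIntegral_iff.mp (Algebra.isIntegral_norm K hw)
    rw [← hz]
    exact z.2
  let u' : integralClosure v.valuationSubring L := ⟨u, hui⟩
  let e' : integralClosure v.valuationSubring L := ⟨e, he⟩
  have hunit : IsUnit (1 + u' * e') := by
    by_contra h
    obtain ⟨I, hI, hmem⟩ := exists_max_ideal_of_mem_nonunits h
    have hmax := Ideal.isMaximal_comap_of_isIntegral_of_isMaximal (R := v.valuationSubring) I
    have htI : algebraMap _ (integralClosure v.valuationSubring L) t' ∈ I := by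
      rw [← Ideal.mem_comap, IsLocalRing.eq_maximalIdeal hmax]
      exact ht'
    have huI : u' ∈ I := hI.isPrime.mem_of_pow_mem n <| by
      convert htI
      exact Subtype.ext hut
    exact I.ne_top_iff_one.mp hI.ne_top ((I.add_mem_iff_left (I.mul_mem_right e' huI)).mp hmem)
  obtain ⟨w, hw⟩ := hunit.exists_right_inv
  have hw' : (1 + u * e) * (w : L) = 1 := congrArg Subtype.val hw
  have hmul : v (Algebra.norm K (1 + u * e)) * v (Algebra.norm K (w : L)) = 1 := by
    rw [← map_mul, ← map_mul, hw', map_one, map_one]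
  refine le_antisymm (hle _ (1 + u' * e').2) ?_
  rw [← hmul]
  exact mul_le_of_le_one_right' (hle _ w.2)

theorem RatFunc.inftyValuation_algebraMap {F : Type*} [Field F] [DecidableEq (RatFunc F)]
    {p : F[X]} (hp : p ≠ 0) :
    RatFunc.inftyValuation F (algebraMap F[X] (RatFunc F) p) =
      WithZero.exp (p.natDegree : ℤ) :=
  RatFunc.inftyValuation.polynomial F hp

theorem pow_mul_one_add_mul_pow_add_one {E : Type*} [Field E] {z y : E} (hz : z ≠ 0) (hy : y ≠ 0)
    (α B : ℕ) : z ^ α * (1 + z) * y ^ B + 1 =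
      z ^ (α + 1) * y ^ B * (1 + z⁻¹ * (1 + z⁻¹ ^ α * y⁻¹ ^ B)) := by
  simp only [inv_pow]
  field_simp
  ring

open scoped Classical in
/-- Every place over `∞` is a pole of `x`, so the term `x ^ (α + 1) * X ^ B` dominates. -/
theorem natDegree_norm_add_one {F S : Type*} [Field F] [CommRing S] [IsDomain S] [Algebra F[X] S]
    [Module.Free F[X] S] [Module.Finite F[X] S] {c : F[X]} (hc : 0 < c.natDegree) {x : S}
    (hx : x ^ Module.finrank F[X] S = algebraMap F[X] S c) (α B : ℕ) :
    (Algebra.norm F[X] (x ^ α * (1 + x) * algebraMap F[X] S X ^ B + 1)).natDegree =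
      (α + 1) * c.natDegree + Module.finrank F[X] S * B := by
  set n := Module.finrank F[X] S
  let K := RatFunc F
  let L := FractionRing S
  let v := RatFunc.inftyValuation F
  have hinj : Function.Injective (algebraMap F[X] L) := FaithfulSMul.algebraMap_injective _ _
  let _ : Algebra K L := (IsFractionRing.lift (K := K) hinj).toAlgebra
  have : IsScalarTower F[X] K L :=
    .of_algebraMap_eq fun p => (IsFractionRing.lift_algebraMap hinj p).symm
  have hn : n ≠ 0 := Module.finrank_pos.ne'
  have hc0 : c ≠ 0 := ne_zero_of_natDegree_gt hc
  have hnorm : ∀ s : S, Algebra.norm K (algebraMap S L s) =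
      algebraMap F[X] K (Algebra.norm F[X] s) :=
    Algebra.norm_localization F[X] (nonZeroDivisors F[X])
  have hxL : algebraMap S L x ^ n = algebraMap K L (algebraMap F[X] K c) := by
    rw [← map_pow, hx, ← IsScalarTower.algebraMap_apply, ← IsScalarTower.algebraMap_apply]
  have hx0 : algebraMap S L x ≠ 0 := by
    intro h
    rw [h, zero_pow hn, eq_comm, ← IsScalarTower.algebraMap_apply] at hxL
    exact hc0 (hinj (by simpa using hxL))
  have hX : algebraMap S L (algebraMap F[X] S X) = algebraMap K L RatFunc.X := by
    rw [← RatFunc.algebraMap_X, ← IsScalarTower.algebraMap_apply, ← IsScalarTower.algebraMap_apply]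
  have hy0 : algebraMap K L RatFunc.X ≠ 0 := 
    (map_ne_zero (algebraMap K L)).mpr RatFunc.X_ne_zero
  have hvc : v (algebraMap F[X] K c) = WithZero.exp (c.natDegree : ℤ) :=
    RatFunc.inftyValuation_algebraMap hc0
  have hut : (algebraMap S L x)⁻¹ ^ n = algebraMap K L (algebraMap F[X] K c)⁻¹ := by
    rw [inv_pow, hxL, map_inv₀]
  have ht : v (algebraMap F[X] K c)⁻¹ < 1 := by
    rw [map_inv₀, hvc, ← WithZero.exp_neg, ← WithZero.exp_zero, WithZero.exp_lt_exp]
    omega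
  have hui : IsIntegral v.valuationSubring (algebraMap S L x)⁻¹ := by
    refine IsIntegral.of_pow (Nat.pos_of_ne_zero hn) (hut ▸ ?_)
    exact isIntegral_algebraMap (R := v.valuationSubring) (x := ⟨_, ht.le⟩)
  have hyi : IsIntegral v.valuationSubring (algebraMap K L RatFunc.X)⁻¹ := by
    have hy : v RatFunc.X⁻¹ ≤ 1 := by
      rw [map_inv₀, RatFunc.inftyValuation.X, ← WithZero.exp_neg, ← WithZero.exp_zero,
        WithZero.exp_le_exp]
      omega
    rw [← map_inv₀]
    exact isIntegral_algebraMap (R := v.valuationSubring) (x := ⟨_, hy⟩)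
  have hone := v.map_norm_one_add_mul_eq_one ht hut
    (isIntegral_one.add ((hui.pow α).mul (hyi.pow B)))
  have hfac : algebraMap S L (x ^ α * (1 + x) * algebraMap F[X] S X ^ B + 1) =
      algebraMap S L x ^ (α + 1) * algebraMap K L RatFunc.X ^ B * (1 + (algebraMap S L x)⁻¹ *
        (1 + (algebraMap S L x)⁻¹ ^ α * (algebraMap K L RatFunc.X)⁻¹ ^ B)) := by
    rw [← pow_mul_one_add_mul_pow_add_one hx0 hy0, ← hX]
    simp only [map_add, map_mul, map_pow, map_one]
  have hvx : v (Algebra.norm K (algebraMap S L x)) = WithZero.exp (c.natDegree : ℤ) := by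
    have h : v (Algebra.norm K (algebraMap S L x ^ n)) = WithZero.exp (c.natDegree : ℤ) ^ n := by
      rw [← map_pow, hx, hnorm, Algebra.norm_algebraMap, map_pow, map_pow, hvc]
    rw [map_pow, map_pow] at h
    exact (pow_left_inj₀ zero_le zero_le hn).mp h
  have hvy : v (Algebra.norm K (algebraMap K L RatFunc.X)) = WithZero.exp (n : ℤ) := by
    rw [← hX, hnorm, Algebra.norm_algebraMap, map_pow, map_pow, RatFunc.algebraMap_X,
      RatFunc.inftyValuation.X, ← WithZero.exp_nsmul, nsmul_one]
  have hv : v (algebraMap F[X] K (Algebra.norm F[X]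
      (x ^ α * (1 + x) * algebraMap F[X] S X ^ B + 1))) =
      WithZero.exp (((α + 1) * c.natDegree + n * B : ℕ) : ℤ) := by
    rw [← hnorm, hfac, map_mul, map_mul, hone, mul_one, map_mul, map_mul, map_pow, map_pow,
      map_pow, map_pow, hvx, hvy, ← WithZero.exp_nsmul, ← WithZero.exp_nsmul, ← WithZero.exp_add]
    congr 1
    push_cast
    simp
    ring
  rw [RatFunc.inftyValuation_algebraMap, WithZero.exp_inj] at hv
  · exact_mod_cast hv
  · intro h
    simp [h] at hv

theorem irreducible_X_pow_sub_C_mul {F : Type*} [Field F] (β : ℕ) {n : ℕ} (hn : n ≠ 0) :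
    Irreducible (X ^ n - C (X ^ β * (X + 1)) : F[X][X]) := by
  have hmon : (X ^ n - C (X ^ β * (X + 1)) : F[X][X]).Monic := monic_X_pow_sub_C _ hn
  have hprime : Prime (X + 1 : F[X]) := by simpa using prime_X_sub_C (-1 : F)
  have hP := (Ideal.span_singleton_prime hprime.ne_zero).mpr hprime
  have hdeg : (X ^ n - C (X ^ β * (X + 1)) : F[X][X]).degree = n :=
    degree_X_pow_sub_C (Nat.pos_of_ne_zero hn) _
  refine irreducible_of_eisenstein_criterion hP ?_ ?_ ?_ ?_ hmon.isPrimitive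
  · rw [hmon.leadingCoeff]
    exact (Ideal.ne_top_iff_one _).mp hP.ne_top
  · intro m hm
    rw [hdeg, Nat.cast_lt] at hm
    rw [coeff_sub, coeff_X_pow, if_neg hm.ne, zero_sub, coeff_C]
    split_ifs
    · exact neg_mem (Ideal.mul_mem_left _ _ (Ideal.mem_span_singleton_self _))
    · simp
  · rw [hdeg]
    exact_mod_cast Nat.pos_of_ne_zero hn
  · rw [coeff_sub, coeff_X_pow, if_neg (Ne.symm hn), zero_sub, coeff_C_zero, neg_mem_iff,
      Ideal.span_singleton_pow, Ideal.mem_span_singleton, sq,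
      mul_dvd_mul_iff_right hprime.ne_zero]
    intro h
    have := dvd_iff_isRoot.mp ((by simpa using hprime.dvd_of_dvd_pow h : X - C (-1 : F) ∣ X))
    simp at this

/-- The coordinate ring of the affine curve `x ^ n = y ^ β * (y + 1)`, presented over `F[y]`. -/
abbrev CurveRing (F : Type*) [Field F] (n β : ℕ) : Type _ :=
  AdjoinRoot (X ^ n - C (X ^ β * (X + 1)) : F[X][X])

namespace CurveRing

variable (F : Type*) [Field F] (n β : ℕ)

/-- The coordinate function `x`. -/
abbrev x : CurveRing F n β := AdjoinRoot.root _

/-- The coordinate function `y`. -/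
abbrev y : CurveRing F n β := algebraMap F[X] _ X

theorem x_pow : x F n β ^ n = algebraMap F[X] _ (X ^ β * (X + 1)) := by
  have h := AdjoinRoot.eval₂_root (X ^ n - C (X ^ β * (X + 1)) : F[X][X])
  rwa [eval₂_sub, eval₂_X_pow, eval₂_C, sub_eq_zero] at h

theorem x_pow_eq : x F n β ^ n = y F n β ^ β * (y F n β + 1) :=
  (x_pow F n β).trans (by simp only [map_mul, map_add, map_pow, map_one])

variable {n} in
theorem finrank_quotient_span (hn : n ≠ 0) (α B : ℕ) :
    Module.finrank F (CurveRing F n β ⧸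
        Ideal.span {x F n β ^ α * (1 + x F n β) * y F n β ^ B + 1}) =
      (α + 1) * (β + 1) + n * B := by
  have hmon : (X ^ n - C (X ^ β * (X + 1)) : F[X][X]).Monic := monic_X_pow_sub_C _ hn
  have : IsDomain (CurveRing F n β) :=
    AdjoinRoot.isDomain_of_prime (irreducible_X_pow_sub_C_mul β hn).prime
  let pb := AdjoinRoot.powerBasis' hmon
  have := Module.Free.of_basis pb.basis
  have := Module.Finite.of_basis pb.basis
  have hrank : Module.finrank F[X] (CurveRing F n β) = n := by
    rw [pb.finrank, AdjoinRoot.powerBasis'_dim, natDegree_X_pow_sub_C]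
  have hdeg : (X ^ β * (X + 1) : F[X]).natDegree = β + 1 := by
    have h1 : (X + 1 : F[X]).Monic := by simpa using monic_X_add_C (1 : F)
    rw [(monic_X_pow β).natDegree_mul h1, natDegree_X_pow]
    simpa using natDegree_X_add_C (1 : F)
  have hnorm := natDegree_norm_add_one (c := X ^ β * (X + 1)) (by omega) (x := x F n β)
    (by rw [hrank, x_pow]) α B
  rw [hdeg, hrank] at hnorm
  rw [finrank_quotient_span_eq_natDegree_norm pb.basis, hnorm]
  intro h
  rw [h, Algebra.norm_zero, natDegree_zero] at hnorm
  nlinarith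

end CurveRing

theorem mono_mul_mono (i j k l : ℤ) : mono i j * mono k l = mono (i + k) (j + l) := by
  simp [mono, AddMonoidAlgebra.single_mul_single]

theorem mono_zero_zero : mono 0 0 = 1 := rfl

theorem mono_pow (i j : ℤ) (n : ℕ) : mono i j ^ n = mono (n * i) (n * j) := by
  simp [mono, AddMonoidAlgebra.single_pow]

section Eval

variable {T : Type*} [CommRing T] [Algebra (ZMod 2) T]

/-- Evaluation of Laurent polynomials at a pair of units. -/
def laurentEval (u v : Tˣ) : LaurentR →ₐ[ZMod 2] T :=
  AddMonoidAlgebra.lift (ZMod 2) T (ℤ × ℤ)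
    { toFun p := ↑(u ^ p.toAdd.1 * v ^ p.toAdd.2)
      map_one' := by simp
      map_mul' p q := by
        rw [← Units.val_mul]
        congr 1
        simp only [toAdd_mul, Prod.fst_add, Prod.snd_add, zpow_add]
        exact mul_mul_mul_comm .. }

theorem laurentEval_mono (u v : Tˣ) (i j : ℤ) : laurentEval u v (mono i j) = ↑(u ^ i * v ^ j) := by
  simp [laurentEval, mono]

theorem LaurentR.algHom_ext {φ ψ : LaurentR →ₐ[ZMod 2] T} (hx : φ (mono 1 0) = ψ (mono 1 0))
    (hy : φ (mono 0 1) = ψ (mono 0 1)) : φ = ψ := by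
  let ι := (AddMonoidAlgebra.of (ZMod 2) (ℤ × ℤ)).toHomUnits
  have key : ∀ χ : LaurentR →ₐ[ZMod 2] T, ∀ i j : ℤ, χ (mono i j) =
      ↑(Units.map (χ : LaurentR →* T) (ι (.ofAdd (1, 0))) ^ i *
        Units.map (χ : LaurentR →* T) (ι (.ofAdd (0, 1))) ^ j) := by
    intro χ i j
    simp only [← map_zpow, ← map_mul, ← ofAdd_zsmul, ← ofAdd_add]
    simp [ι, mono]
  have h1 : Units.map (φ : LaurentR →* T) (ι (.ofAdd (1, 0))) =
      Units.map (ψ : LaurentR →* T) (ι (.ofAdd (1, 0))) :=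
    Units.ext hx
  have h2 : Units.map (φ : LaurentR →* T) (ι (.ofAdd (0, 1))) =
      Units.map (ψ : LaurentR →* T) (ι (.ofAdd (0, 1))) :=
    Units.ext hy
  refine AddMonoidAlgebra.algHom_ext (fun p => ?_) (by ext)
  exact (key φ p.1 p.2).trans (by rw [h1, h2]; exact (key ψ p.1 p.2).symm)

theorem two_eq_zero_of_algebra_zmod_two (T : Type*) [CommRing T] [Algebra (ZMod 2) T] :
    (2 : T) = 0 := by
  rw [← map_ofNat (algebraMap (ZMod 2) T) 2, show (OfNat.ofNat 2 : ZMod 2) = 0 by decide, map_zero]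

theorem laurentEval_fBB_eq_zero {u v : Tˣ} {α B : ℕ}
    (h : (u : T) ^ α * (1 + u) * (v : T) ^ B + 1 = 0) : laurentEval u v (fBB α (-B)) = 0 := by
  have hunit : IsUnit ((u : T) ^ α * (v : T) ^ B) := (u ^ α * v ^ B).isUnit
  rw [← hunit.mul_right_eq_zero, ← h]
  have hinv : (u : T) ^ α * (v : T) ^ B * ↑(u ^ (-α : ℤ) * v ^ (-B : ℤ)) = 1 := by
    norm_cast
    rw [mul_mul_mul_comm, zpow_neg, zpow_neg, zpow_natCast, zpow_natCast, mul_inv_cancel,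
      mul_inv_cancel, one_mul, Units.val_one]
  simp only [fBB, map_add, map_one, laurentEval_mono, mul_add, hinv]
  simp
  ring

theorem laurentEval_gBB_eq_zero {u v : Tˣ} {β n : ℕ}
    (h : (u : T) ^ n = (v : T) ^ β * (v + 1)) : laurentEval u v (gBB β n) = 0 := by
  have hunit : IsUnit ((v : T) ^ β) := (v ^ β).isUnit
  rw [← hunit.mul_right_eq_zero]
  have hinv : (v : T) ^ β * ↑(u ^ (n : ℤ) * v ^ (-β : ℤ)) = (u : T) ^ n := by
    norm_cast
    simp [zpow_neg, mul_left_comm]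
  simp only [gBB, map_add, map_one, laurentEval_mono, mul_add, hinv, h]
  simp
  linear_combination (v ^ β * (1 + v) : T) * two_eq_zero_of_algebra_zmod_two T

end Eval

/-- For `α, B ≥ 1` the relation `f = 0` already makes `x` and `y` invertible. -/
theorem exists_algEquiv_curveRing_quotient {α B : ℕ} (hα : α ≠ 0) (hB : B ≠ 0) (β n : ℕ) :
    Nonempty ((LaurentR ⧸ Ideal.span ({fBB α (-B), gBB β n} : Set LaurentR)) ≃ₐ[ZMod 2]
      (CurveRing (ZMod 2) n β ⧸ Ideal.span {CurveRing.x (ZMod 2) n β ^ α *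
        (1 + CurveRing.x (ZMod 2) n β) * CurveRing.y (ZMod 2) n β ^ B + 1})) := by
  set I := Ideal.span ({fBB α (-B), gBB β n} : Set LaurentR)
  set J := Ideal.span {CurveRing.x (ZMod 2) n β ^ α *
        (1 + CurveRing.x (ZMod 2) n β) * CurveRing.y (ZMod 2) n β ^ B + 1}
  let x' : CurveRing (ZMod 2) n β ⧸ J := Ideal.Quotient.mk J (CurveRing.x (ZMod 2) n β)
  let y' : CurveRing (ZMod 2) n β ⧸ J := Ideal.Quotient.mk J (CurveRing.y (ZMod 2) n β)
  have hF : x' ^ α * (1 + x') * y' ^ B + 1 = 0 :=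
    Ideal.Quotient.eq_zero_iff_mem.mpr (Ideal.mem_span_singleton_self _)
  have hG : x' ^ n = y' ^ β * (y' + 1) :=
    congrArg (Ideal.Quotient.mk J) (CurveRing.x_pow_eq (ZMod 2) n β)
  have hunit : IsUnit (x' ^ α * (1 + x') * y' ^ B) := by
    rw [eq_neg_of_add_eq_zero_left hF]
    exact isUnit_one.neg
  obtain ⟨u, hu⟩ : IsUnit x' := (isUnit_pow_iff hα).mp
    (isUnit_of_mul_isUnit_left (isUnit_of_mul_isUnit_left hunit))
  obtain ⟨v, hv⟩ : IsUnit y' := (isUnit_pow_iff hB).mp (isUnit_of_mul_isUnit_right hunit)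
  let toCurve : (LaurentR ⧸ I) →ₐ[ZMod 2] (CurveRing (ZMod 2) n β ⧸ J) :=
    Ideal.Quotient.liftₐ I (laurentEval u v) fun p hp => by
      refine (Ideal.span_le (I := RingHom.ker (laurentEval u v))).mpr ?_ hp
      rintro q (rfl | rfl)
      · exact laurentEval_fBB_eq_zero (by rw [hu, hv, hF])
      · exact laurentEval_gBB_eq_zero (by rw [hu, hv, hG])
  let X' : LaurentR ⧸ I := Ideal.Quotient.mk I (mono 1 0)
  let Y' : LaurentR ⧸ I := Ideal.Quotient.mk I (mono 0 1)
  have hf : X' ^ α * (1 + X') * Y' ^ B + 1 = 0 := by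
    have : mono 1 0 ^ α * (1 + mono 1 0) * mono 0 1 ^ B + 1 = mono α B * fBB α (-B) := by
      simp only [fBB, ← mono_zero_zero, mono_pow, mul_add, add_mul, mono_mul_mono]
      simp
    refine Ideal.Quotient.eq_zero_iff_mem.mpr ?_
    change mono 1 0 ^ α * (1 + mono 1 0) * mono 0 1 ^ B + 1 ∈ I
    exact this ▸ I.mul_mem_left _ (Ideal.subset_span (by simp))
  have hg : X' ^ n = Y' ^ β * (Y' + 1) := by
    have : mono 1 0 ^ n - mono 0 1 ^ β * (mono 0 1 + 1) = mono 0 β * gBB β n := by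
      simp only [gBB, ← mono_zero_zero, mono_pow, mul_add, mono_mul_mono]
      simp
      linear_combination (-mono 0 (β + 1) - mono 0 β) * two_eq_zero_of_algebra_zmod_two LaurentR
    refine Ideal.Quotient.eq.mpr (this ▸ I.mul_mem_left _ ?_)
    exact Ideal.subset_span (by simp)
  let lift : CurveRing (ZMod 2) n β →ₐ[ZMod 2] (LaurentR ⧸ I) :=
    AdjoinRoot.liftAlgHom _ (aeval Y') X' (by
      rw [eval₂_sub, eval₂_X_pow, eval₂_C, hg]
      simp)
  have lift_x : lift (CurveRing.x (ZMod 2) n β) = X' := AdjoinRoot.liftAlgHom_root ..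
  have lift_y : lift (CurveRing.y (ZMod 2) n β) = Y' :=
    (AdjoinRoot.liftAlgHom_of ..).trans (aeval_X _)
  let ofCurve : (CurveRing (ZMod 2) n β ⧸ J) →ₐ[ZMod 2] (LaurentR ⧸ I) :=
    Ideal.Quotient.liftₐ J lift fun p hp => by
      refine (Ideal.span_le (I := RingHom.ker lift)).mpr ?_ hp
      rintro q rfl
      change lift _ = 0
      simp only [map_add, map_mul, map_pow, map_one, lift_x, lift_y, hf]
  have toCurve_X : toCurve X' = x' := by
    refine (laurentEval_mono u v 1 0).trans ?_
    simp [hu]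
  have toCurve_Y : toCurve Y' = y' := by
    refine (laurentEval_mono u v 0 1).trans ?_
    simp [hv]
  refine ⟨AlgEquiv.ofAlgHom toCurve ofCurve ?_ ?_⟩
  · refine Ideal.Quotient.algHom_ext _ (AdjoinRoot.algHom_ext' (Polynomial.algHom_ext ?_) ?_)
    · change toCurve (lift (CurveRing.y (ZMod 2) n β)) = y'
      rw [lift_y, toCurve_Y]
    · change toCurve (lift (CurveRing.x (ZMod 2) n β)) = x'
      rw [lift_x, toCurve_X]
  · refine Ideal.Quotient.algHom_ext _ (LaurentR.algHom_ext ?_ ?_)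
    · change ofCurve (toCurve X') = X'
      rw [toCurve_X]
      exact lift_x
    · change ofCurve (toCurve Y') = Y'
      rw [toCurve_Y]
      exact lift_y

theorem finrank_quotient_fBB_gBB {α B n : ℕ} (hα : α ≠ 0) (hB : B ≠ 0) (hn : n ≠ 0) (β : ℕ) :
    Module.finrank (ZMod 2) (LaurentR ⧸ Ideal.span ({fBB α (-B), gBB β n} : Set LaurentR)) =
      (α + 1) * (β + 1) + n * B := by
  obtain ⟨e⟩ := exists_algEquiv_curveRing_quotient hα hB β n
  rw [e.toLinearEquiv.finrank_eq, CurveRing.finrank_quotient_span _ _ hn]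

theorem finrank_quotient_swap (α β a b : ℤ) :
    Module.finrank (ZMod 2) (LaurentR ⧸ Ideal.span ({fBB α b, gBB β a} : Set LaurentR)) =
      Module.finrank (ZMod 2) (LaurentR ⧸ Ideal.span ({fBB β a, gBB α b} : Set LaurentR)) := by
  let σ : LaurentR ≃ₐ[ZMod 2] LaurentR :=
    AddMonoidAlgebra.domCongr (ZMod 2) (ZMod 2) AddEquiv.prodComm
  have hσ : ∀ i j, σ (mono i j) = mono j i := fun i j => by simp [σ, mono]
  refine (Ideal.quotientEquivAlg _ _ σ ?_).toLinearEquiv.finrank_eq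
  change _ = Ideal.map (σ : LaurentR →+* LaurentR) _
  rw [Ideal.map_span, Set.image_pair, Set.pair_comm]
  simp [fBB, gBB, hσ]

/-- If `α, β ≥ 1` and `a·b < 0`, the topological index of BB(ᾱ, β̄, a, b) is `Q = (α+1)·(β+1) − a·b`. -/
theorem bb_index_regime_mixed_sign (α β a b : ℤ) (hα : 1 ≤ α) (hβ : 1 ≤ β) (hab : a * b < 0) :
    (Module.finrank (ZMod 2)
      (LaurentR ⧸ Ideal.span ({fBB α b, gBB β a} : Set LaurentR)) : ℤ) = (α + 1) * (β + 1) - a * b := by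
  lift α to ℕ using by omega
  lift β to ℕ using by omega
  rcases mul_neg_iff.mp hab with ⟨ha, hb⟩ | ⟨ha, hb⟩
  · obtain ⟨B, rfl⟩ : ∃ B : ℕ, b = -B := ⟨b.natAbs, by omega⟩
    lift a to ℕ using ha.le
    rw [finrank_quotient_fBB_gBB (by omega) (by omega) (by omega)]
    push_cast
    ring
  · obtain ⟨A, rfl⟩ : ∃ A : ℕ, a = -A := ⟨a.natAbs, by omega⟩
    lift b to ℕ using hb.le
    rw [finrank_quotient_swap, finrank_quotient_fBB_gBB (by omega) (by omega) (by omega)]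
    push_cast
    ring
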